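/- Let C be an [n,k] linear code over F_q. Then for every 1 ≤ i ≤ k, the i-th top-down greedy weight of C equals the i-th top-down greedy weight of its matroid M_C: ẽ_i(C) = ẽ_i(M_C). -/

import Mathlib

open Finset
open scoped Classical

noncomputable section

/-- The rank in the matroid `M_C`: `r(X)` is the rank of the column submatrix `H_X`. -/
def colRank {F : Type*} [Field F] {m n : ℕ} (H : Matrix (Fin m) (Fin n) F)
    (X : Finset (Fin n)) : ℕ :=
  Module.finrank F (Submodule.span F ((fun j i => H i j) '' (X : Set (Fin n))))

/-- The nullity function of the matroid `M_C`: `n(X) = |X| - r(X)`. -/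
def nulC {F : Type*} [Field F] {m n : ℕ} (H : Matrix (Fin m) (Fin n) F)
    (X : Finset (Fin n)) : ℕ :=
  X.card - colRank H X

/-- The support of a word. -/
def supp {F : Type*} [Field F] {n : ℕ} (c : Fin n → F) : Finset (Fin n) :=
  Finset.univ.filter (fun i => c i ≠ 0)

/-- The support of a subcode. -/
def suppD {F : Type*} [Field F] {n : ℕ} (D : Submodule F (Fin n → F)) : Finset (Fin n) :=
  Finset.univ.filter (fun i => ∃ c ∈ D, c i ≠ 0)

/-- The weight of a subcode: the cardinality of its support. -/
def wt {F : Type*} [Field F] {n : ℕ} (D : Submodule F (Fin n → F)) : ℕ := (suppD D).card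

/-- The subcode `C(X) = {c ∈ C : Supp(c) ⊆ X}`. -/
def codeRestrict {F : Type*} [Field F] {n : ℕ} (C : Submodule F (Fin n → F))
    (X : Finset (Fin n)) : Submodule F (Fin n → F) where
  carrier := {c | c ∈ C ∧ ∀ i ∉ X, c i = 0}
  add_mem' := by
    rintro a b ⟨ha, ha0⟩ ⟨hb, hb0⟩
    exact ⟨C.add_mem ha hb, fun i hi => by simp [Pi.add_apply, ha0 i hi, hb0 i hi]⟩
  zero_mem' := ⟨C.zero_mem, fun i _ => rfl⟩
  smul_mem' := by
    rintro r a ⟨ha, ha0⟩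
    exact ⟨C.smul_mem r ha, fun i hi => by simp [Pi.smul_apply, ha0 i hi]⟩

/-- The code defined by the parity check matrix `H`: `C = {x : H x = 0}`. -/
def codeOf {F : Type*} [Field F] {m n : ℕ} (H : Matrix (Fin m) (Fin n) F) :
    Submodule F (Fin n → F) :=
  LinearMap.ker H.mulVecLin

/-- The `r`-th generalized Hamming weight of a code `C`. -/
def dC {F : Type*} [Field F] {n : ℕ} (C : Submodule F (Fin n → F)) (r : ℕ) : ℕ :=
  sInf {w | ∃ D : Submodule F (Fin n → F), D ≤ C ∧ Module.finrank F D = r ∧ wt D = w}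

/-- `D` computes `d_r(C)`: `D ⊆ C`, `dim D = r` and `wt(D) = d_r(C)`. -/
def Computes {F : Type*} [Field F] {n : ℕ} (C : Submodule F (Fin n → F)) (r : ℕ)
    (D : Submodule F (Fin n → F)) : Prop :=
  D ≤ C ∧ Module.finrank F D = r ∧ wt D = dC C r

end
noncomputable section

/-- `TDG C k j` is the set of top-down greedy `(k-j)`-subcodes of an `[n,k]` code `C`:
`TDG C k 0 = {C}`, and a top-down greedy `r`-subcode (`r = k-(j+1)`) is an `r`-dimensional
subcode contained in some top-down greedy `(r+1)`-subcode, of minimal weight among all such. -/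
def TDG {F : Type*} [Field F] {n : ℕ} (C : Submodule F (Fin n → F)) (k : ℕ) :
    ℕ → Set (Submodule F (Fin n → F))
  | 0 => {C}
  | (j+1) => {D | (∃ D' ∈ TDG C k j, D ≤ D') ∧ Module.finrank F D = k - (j+1) ∧
      ∀ D₂ : Submodule F (Fin n → F), (∃ D₂' ∈ TDG C k j, D₂ ≤ D₂') →
        Module.finrank F D₂ = k - (j+1) → wt D ≤ wt D₂}

/-- `w` is the lexicographically smallest element of `A`. -/
def IsLexMin {k : ℕ} (A : Set (Fin k → ℕ)) (w : Fin k → ℕ) : Prop :=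
  w ∈ A ∧ ∀ u ∈ A, toLex w ≤ toLex u

/-- `w` is the reverse-lexicographically smallest element of `A`. -/
def IsRevLexMin {k : ℕ} (A : Set (Fin k → ℕ)) (w : Fin k → ℕ) : Prop :=
  w ∈ A ∧ ∀ u ∈ A, toLex (w ∘ Fin.rev) ≤ toLex (u ∘ Fin.rev)

/-- The set `{e(S) : S ∈ Σ}` of cardinality-tuples of chains `σ_1 ⊊ ⋯ ⊊ σ_k` with
`σ_i ∈ 𝒩_i` for the matroid `M_C` of the code with parity check matrix `H`. -/
def eSetC {F : Type*} [Field F] {m n : ℕ} (H : Matrix (Fin m) (Fin n) F) (k : ℕ) :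
    Set (Fin k → ℕ) :=
  {u | ∃ σ : Fin k → Finset (Fin n),
    (StrictMono σ ∧ ∀ i : Fin k, nulC H (σ i) = (i : ℕ) + 1) ∧ ∀ i, (σ i).card = u i}

/-!
A flag of top-down greedy subcodes is lexicographically minimal, read from the top, among all flags
of subcodes: as long as the weights of another flag agree with it, the members of that flag are
themselves top-down greedy, so at the next step the greedy member is at most as heavy. Chains
`σ_1 ⊊ ⋯ ⊊ σ_k` and flags of subcodes are compared through `X ↦ C(X)` and `D ↦ Supp D`: the
dimension of `C(X)` is the nullity of `X`, and a top-down greedy subcode `D` satisfies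
`C(Supp D) = D`, because every nonzero subcode has a hyperplane of strictly smaller weight. Hence
the greedy weights are the reverse-lexicographic minimum over the chains.
-/

section LinearAlgebra

variable {F V W : Type*} [DivisionRing F] [AddCommGroup V] [Module F V] [AddCommGroup W]
  [Module F W]

theorem finrank_map_add_finrank_ker_inf (f : V →ₗ[F] W) (p : Submodule F V)
    [FiniteDimensional F p] :
    Module.finrank F (p.map f) + Module.finrank F ↥(LinearMap.ker f ⊓ p) = Module.finrank F p := by
  rw [← LinearMap.finrank_range_add_finrank_ker (f.domRestrict p), LinearMap.range_domRestrict,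
    LinearMap.ker_domRestrict, inf_comm, ← Submodule.map_comap_subtype,
    Submodule.finrank_map_subtype_eq]

end LinearAlgebra

section Lexicographic

theorem toLex_le_toLex_of_forall_le {ι : Type*} {α : ι → Type*} [LinearOrder ι] [WellFoundedLT ι]
    [∀ i, LinearOrder (α i)] {a b : ∀ i, α i} (h : ∀ i, (∀ j < i, a j = b j) → a i ≤ b i) :
    toLex a ≤ toLex b := by
  by_contra! hlt
  obtain ⟨i, heq, hi⟩ := hlt
  exact hi.not_ge (h i fun j hj => (heq j hj).symm)

theorem IsRevLexMin.eq {k : ℕ} {A : Set (Fin k → ℕ)} {v w : Fin k → ℕ} (hv : IsRevLexMin A v)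
    (hw : IsRevLexMin A w) : v = w :=
  Fin.rev_surjective.injective_comp_right
    (toLex_inj.1 ((hv.2 w hw.1).antisymm (hw.2 v hv.1)))

end Lexicographic

section Subcodes

variable {F : Type*} [Field F] {n : ℕ} {C D E : Submodule F (Fin n → F)} {X Y : Finset (Fin n)}

theorem mem_codeRestrict {c : Fin n → F} : c ∈ codeRestrict C X ↔ c ∈ C ∧ ∀ i ∉ X, c i = 0 :=
  Iff.rfl

theorem mem_suppD {i : Fin n} : i ∈ suppD D ↔ ∃ c ∈ D, c i ≠ 0 := by
  simp [suppD]

theorem suppD_mono (h : D ≤ E) : suppD D ⊆ suppD E := fun i hi => by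
  obtain ⟨c, hc, hci⟩ := mem_suppD.1 hi
  exact mem_suppD.2 ⟨c, h hc, hci⟩

theorem nonempty_suppD (hD : D ≠ ⊥) : (suppD D).Nonempty := by
  obtain ⟨c, hc, hc0⟩ := D.ne_bot_iff.1 hD
  obtain ⟨i, hi⟩ := Function.ne_iff.1 hc0
  exact ⟨i, mem_suppD.2 ⟨c, hc, hi⟩⟩

theorem codeRestrict_le : codeRestrict C X ≤ C := fun _ hc => hc.1

theorem codeRestrict_mono (h : X ⊆ Y) : codeRestrict C X ≤ codeRestrict C Y :=
  fun _ hc => ⟨hc.1, fun i hi => hc.2 i (mt (@h i) hi)⟩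

theorem suppD_codeRestrict_subset : suppD (codeRestrict C X) ⊆ X := fun i hi => by
  obtain ⟨c, hc, hci⟩ := mem_suppD.1 hi
  exact not_imp_comm.1 (hc.2 i) hci

theorem le_codeRestrict_suppD (h : D ≤ C) : D ≤ codeRestrict C (suppD D) :=
  fun c hc => ⟨h hc, fun _ hi => not_not.1 fun hci => hi (mem_suppD.2 ⟨c, hc, hci⟩)⟩

theorem wt_codeRestrict_le_card : wt (codeRestrict C X) ≤ X.card :=
  card_le_card suppD_codeRestrict_subset

theorem wt_codeRestrict_compl_singleton_lt {p : Fin n} (hp : p ∈ suppD D) :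
    wt (codeRestrict D {p}ᶜ) < wt D :=
  card_lt_card <| (ssubset_iff_of_subset (suppD_mono codeRestrict_le)).2
    ⟨p, hp, fun h => by simpa using suppD_codeRestrict_subset h⟩

theorem finrank_codeRestrict_compl_singleton_add_one {p : Fin n} (hp : p ∈ suppD D) :
    Module.finrank F (codeRestrict D {p}ᶜ) + 1 = Module.finrank F D := by
  let coord : (Fin n → F) →ₗ[F] F := LinearMap.proj p
  have hker : codeRestrict D {p}ᶜ = LinearMap.ker coord ⊓ D := by
    ext c
    simp [mem_codeRestrict, coord, and_comm]
  have himage : D.map coord = ⊤ := by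
    obtain ⟨c, hc, hcp⟩ := mem_suppD.1 hp
    exact (eq_bot_or_eq_top _).resolve_left
      (Submodule.ne_bot_iff _ |>.2 ⟨c p, Submodule.mem_map_of_mem hc, hcp⟩)
  rw [← finrank_map_add_finrank_ker_inf coord D, himage, finrank_top, Module.finrank_self, hker,
    add_comm]

theorem exists_hyperplane_wt_lt (hD : D ≠ ⊥) :
    ∃ E ≤ D, Module.finrank F E + 1 = Module.finrank F D ∧ wt E < wt D :=
  have ⟨_, hp⟩ := nonempty_suppD hD
  ⟨_, codeRestrict_le, finrank_codeRestrict_compl_singleton_add_one hp,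
    wt_codeRestrict_compl_singleton_lt hp⟩

end Subcodes

section Nullity

variable {F : Type*} [Field F] {m n : ℕ}

theorem codeRestrict_eq_inf_spanSubset (C : Submodule F (Fin n → F)) (X : Finset (Fin n)) :
    codeRestrict C X = C ⊓ Pi.spanSubset F X := by
  ext c
  simp only [mem_codeRestrict, Submodule.mem_inf, Pi.mem_spanSubset_iff, mem_coe]

theorem map_mulVecLin_spanSubset (H : Matrix (Fin m) (Fin n) F) (X : Finset (Fin n)) :
    (Pi.spanSubset F X).map H.mulVecLin =
      Submodule.span F ((fun j i => H i j) '' (X : Set (Fin n))) := by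
  rw [Pi.spanSubset, Submodule.map_span, Set.image_image]
  refine congrArg (Submodule.span F) (Set.image_congr fun j _ => ?_)
  rw [Pi.basisFun_apply, Matrix.mulVecLin_apply, Matrix.mulVec_single_one]
  rfl

theorem finrank_codeRestrict_codeOf (H : Matrix (Fin m) (Fin n) F) (X : Finset (Fin n)) :
    Module.finrank F (codeRestrict (codeOf H) X) = nulC H X := by
  have h := finrank_map_add_finrank_ker_inf H.mulVecLin (Pi.spanSubset F (X : Set (Fin n)))
  rw [map_mulVecLin_spanSubset, Pi.dim_spanSubset, Set.ncard_coe_finset] at h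
  rw [codeRestrict_eq_inf_spanSubset, codeOf, nulC, colRank]
  lia

theorem rank_add_finrank_codeOf (H : Matrix (Fin m) (Fin n) F) :
    H.rank + Module.finrank F (codeOf H) = n :=
  (LinearMap.finrank_range_add_finrank_ker H.mulVecLin).trans (Module.finrank_fin_fun F)

end Nullity

section TopDownGreedy

variable {F : Type*} [Field F] {n k j : ℕ} {C D E : Submodule F (Fin n → F)}

theorem le_of_mem_TDG (hD : D ∈ TDG C k j) : D ≤ C := by
  induction j generalizing D with
  | zero => exact le_of_eq hD
  | succ j ih =>
    obtain ⟨⟨D', hD', hle⟩, -⟩ := hD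
    exact hle.trans (ih hD')

theorem finrank_of_mem_TDG (hC : Module.finrank F C = k) (hD : D ∈ TDG C k j) :
    Module.finrank F D = k - j := by
  cases j with
  | zero => rwa [show D = C from hD]
  | succ j => exact hD.2.1

theorem ne_bot_of_mem_TDG (hC : Module.finrank F C = k) (hj : j < k) (hD : D ∈ TDG C k j) :
    D ≠ ⊥ := by
  rintro rfl
  have := finrank_of_mem_TDG hC hD
  rw [finrank_bot] at this
  lia

theorem wt_eq_of_mem_TDG (hD : D ∈ TDG C k j) (hE : E ∈ TDG C k j) : wt D = wt E := by
  cases j with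
  | zero => rw [show D = C from hD, show E = C from hE]
  | succ j => exact (hD.2.2 E hE.1 hE.2.1).antisymm (hE.2.2 D hD.1 hD.2.1)

theorem wt_lt_of_mem_TDG_succ (hC : Module.finrank F C = k) (hj : j < k)
    (hD : D ∈ TDG C k (j + 1)) (hE : E ∈ TDG C k j) : wt D < wt E := by
  obtain ⟨B, hBE, hBdim, hBwt⟩ := exists_hyperplane_wt_lt (ne_bot_of_mem_TDG hC hj hE)
  have hEdim := finrank_of_mem_TDG hC hE
  exact (hD.2.2 B ⟨E, hE, hBE⟩ (by lia)).trans_lt hBwt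

theorem nonempty_TDG (hC : Module.finrank F C = k) (hj : j ≤ k) : (TDG C k j).Nonempty := by
  induction j with
  | zero => exact ⟨C, rfl⟩
  | succ j ih =>
    obtain ⟨E, hE⟩ := ih (Nat.le_of_succ_le hj)
    obtain ⟨B, hBE, hBdim, -⟩ := exists_hyperplane_wt_lt (ne_bot_of_mem_TDG hC hj hE)
    have hEdim := finrank_of_mem_TDG hC hE
    obtain ⟨D, ⟨hDE, hDdim⟩, hDmin⟩ := exists_minimalFor_of_wellFoundedLT
      (fun D => (∃ D' ∈ TDG C k j, D ≤ D') ∧ Module.finrank F D = k - (j + 1)) wt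
      ⟨B, ⟨E, hE, hBE⟩, by lia⟩
    exact ⟨D, hDE, hDdim, fun D₂ hD₂ hdim₂ => le_of_not_gt fun hlt =>
      hlt.not_ge (hDmin ⟨hD₂, hdim₂⟩ hlt.le)⟩

theorem codeRestrict_suppD_of_mem_TDG (hC : Module.finrank F C = k) (hj : j ≤ k)
    (hD : D ∈ TDG C k j) : codeRestrict C (suppD D) = D := by
  induction j generalizing D with
  | zero =>
    obtain rfl : D = C := hD
    exact codeRestrict_le.antisymm (le_codeRestrict_suppD le_rfl)
  | succ j ih =>
    obtain ⟨D', hD', hle⟩ := hD.1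
    have hle' : codeRestrict C (suppD D) ≤ D' :=
      (codeRestrict_mono (suppD_mono hle)).trans_eq (ih (Nat.le_of_succ_le hj) hD')
    have hlt : codeRestrict C (suppD D) < D' := hle'.lt_of_ne fun h =>
      (wt_lt_of_mem_TDG_succ hC hj hD hD').not_ge (h ▸ wt_codeRestrict_le_card)
    have hdim := Submodule.finrank_lt_finrank_of_lt hlt
    rw [finrank_of_mem_TDG hC hD'] at hdim
    refine (Submodule.eq_of_le_of_finrank_le (le_codeRestrict_suppD (le_of_mem_TDG hD)) ?_).symm
    rw [finrank_of_mem_TDG hC hD]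
    lia

theorem mem_TDG_of_wt_le (hC : Module.finrank F C = k) {D E : Fin k → Submodule F (Fin n → F)}
    (hD : Antitone D) (hDC : ∀ l, D l ≤ C) (hdim : ∀ l, Module.finrank F (D l) = k - l)
    (hE : ∀ l : Fin k, E l ∈ TDG C k l) (i : Fin k) (hle : ∀ l ≤ i, wt (D l) ≤ wt (E l)) :
    D i ∈ TDG C k i := by
  obtain ⟨i, hi⟩ := i
  induction i with
  | zero => exact Submodule.eq_of_le_of_finrank_eq (hDC _) ((hdim _).trans hC.symm)
  | succ i ih =>
    have hstep : (⟨i, by lia⟩ : Fin k) ≤ ⟨i + 1, hi⟩ := Nat.le_succ i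
    refine ⟨⟨_, ih _ fun l hl => hle l (hl.trans hstep), hD hstep⟩, hdim _, ?_⟩
    exact fun B hB hBdim => (hle _ le_rfl).trans ((hE ⟨i + 1, hi⟩).2.2 B hB hBdim)

theorem toLex_wt_le_of_mem_TDG (hC : Module.finrank F C = k)
    {D E : Fin k → Submodule F (Fin n → F)} (hD : Antitone D) (hDC : ∀ l, D l ≤ C)
    (hdim : ∀ l, Module.finrank F (D l) = k - l) (hE : ∀ l : Fin k, E l ∈ TDG C k l) :
    toLex (fun l => wt (E l)) ≤ toLex (fun l => wt (D l)) := by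
  refine toLex_le_toLex_of_forall_le fun i heq => ?_
  obtain ⟨_ | i, hi⟩ := i
  · have hD₀ : D ⟨0, hi⟩ ∈ TDG C k 0 :=
      Submodule.eq_of_le_of_finrank_eq (hDC _) ((hdim _).trans hC.symm)
    exact (wt_eq_of_mem_TDG (hE ⟨0, hi⟩) hD₀).le
  · have hprev : D ⟨i, by lia⟩ ∈ TDG C k i :=
      mem_TDG_of_wt_le hC hD hDC hdim hE ⟨i, by lia⟩ fun l hl =>
        (heq l (Nat.lt_succ_of_le (Fin.le_def.1 hl))).ge
    exact (hE ⟨i + 1, hi⟩).2.2 _ ⟨_, hprev, hD (Nat.le_succ i)⟩ (hdim _)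

end TopDownGreedy

/-- A top-down greedy flag of an `[n,k]` code `C`: an increasing sequence of subcodes, indexed by
dimension, whose `r`-th term is a top-down greedy `r`-subcode. Terms of index above `k` equal `C`,
since `k - r` is then `0`. -/
structure IsGreedyFlag {F : Type*} [Field F] {n : ℕ} (C : Submodule F (Fin n → F)) (k : ℕ)
    (g : ℕ → Submodule F (Fin n → F)) : Prop where
  monotone : Monotone g
  mem_TDG (r : ℕ) : g r ∈ TDG C k (k - r)

namespace IsGreedyFlag

variable {F : Type*} [Field F] {m n k : ℕ} {C : Submodule F (Fin n → F)}
  {g : ℕ → Submodule F (Fin n → F)}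

theorem exists_of_finrank_eq (hC : Module.finrank F C = k) : ∃ g, IsGreedyFlag C k g := by
  have hparent : ∀ j, ∀ D ∈ TDG C k j, ∃ D' ∈ TDG C k (j - 1), D ≤ D'
    | 0, D, hD => ⟨D, hD, le_rfl⟩
    | _ + 1, _, hD => hD.1
  choose! parent hmem hle using hparent
  obtain ⟨D₀, hD₀⟩ := nonempty_TDG hC le_rfl
  let g : ℕ → Submodule F (Fin n → F) := Nat.rec D₀ fun r D => parent (k - r) D
  have hg : ∀ r, g r ∈ TDG C k (k - r) := fun r => by
    induction r with
    | zero => exact hD₀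
    | succ r ih => exact hmem _ _ ih
  exact ⟨g, monotone_nat_of_le_succ fun r => hle _ _ (hg r), hg⟩

theorem suppD_ssubset_suppD_succ (hg : IsGreedyFlag C k g) (hC : Module.finrank F C = k) {r : ℕ}
    (hr : r < k) : suppD (g r) ⊂ suppD (g (r + 1)) := by
  have hr_mem : g r ∈ TDG C k (k - (r + 1) + 1) := by
    simpa only [show k - (r + 1) + 1 = k - r by lia] using hg.mem_TDG r
  have hlt : wt (g r) < wt (g (r + 1)) :=
    wt_lt_of_mem_TDG_succ hC (by lia) hr_mem (hg.mem_TDG (r + 1))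
  exact (suppD_mono (hg.monotone r.le_succ)).ssubset_of_ne fun h => hlt.ne (congrArg card h)

theorem wt_mem_eSetC {H : Matrix (Fin m) (Fin n) F} (hg : IsGreedyFlag (codeOf H) k g)
    (hC : Module.finrank F (codeOf H) = k) : (fun i : Fin k => wt (g (i + 1))) ∈ eSetC H k := by
  refine ⟨fun i => suppD (g (i + 1)), ⟨fun i j hij => ?_, fun i => ?_⟩, fun i => rfl⟩
  · exact (hg.suppD_ssubset_suppD_succ hC (by lia)).trans_subset
      (suppD_mono (hg.monotone (by lia)))
  · rw [← finrank_codeRestrict_codeOf,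
      codeRestrict_suppD_of_mem_TDG hC (Nat.sub_le _ _) (hg.mem_TDG _),
      finrank_of_mem_TDG hC (hg.mem_TDG _)]
    lia

theorem isRevLexMin_wt {H : Matrix (Fin m) (Fin n) F} (hg : IsGreedyFlag (codeOf H) k g)
    (hC : Module.finrank F (codeOf H) = k) :
    IsRevLexMin (eSetC H k) fun i => wt (g (i + 1)) := by
  refine ⟨hg.wt_mem_eSetC hC, ?_⟩
  rintro u ⟨σ, ⟨hσ, hnullity⟩, hcard⟩
  let D : Fin k → Submodule F (Fin n → F) := fun l => codeRestrict (codeOf H) (σ l.rev)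
  have hD : Antitone D := fun i l hil => codeRestrict_mono (hσ.monotone (Fin.rev_le_rev.2 hil))
  have hdim (l : Fin k) : Module.finrank F (D l) = k - l := by
    rw [finrank_codeRestrict_codeOf, hnullity, Fin.val_rev]
    lia
  have hmem (l : Fin k) : g (l.rev + 1) ∈ TDG (codeOf H) k l := by
    simpa only [Fin.val_rev, show k - (k - (l + 1) + 1) = (l : ℕ) by lia] using
      hg.mem_TDG (l.rev + 1)
  calc
    toLex (fun l : Fin k => wt (g (l.rev + 1))) ≤ toLex (fun l => wt (D l)) :=
      toLex_wt_le_of_mem_TDG hC hD (fun _ => codeRestrict_le) hdim hmem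
    _ ≤ toLex (u ∘ Fin.rev) :=
      Pi.toLex_monotone fun l => wt_codeRestrict_le_card.trans_eq (hcard l.rev)

end IsGreedyFlag

theorem statement13_general {F : Type*} [Field F] {m k n : ℕ} (H : Matrix (Fin m) (Fin n) F)
    (hC : Module.finrank F (codeOf H) = k) (v : Fin k → ℕ) (hv : IsRevLexMin (eSetC H k) v) :
    ∀ i : Fin k, ∀ D ∈ TDG (codeOf H) k (k - ((i : ℕ) + 1)), wt D = v i := by
  intro i D hD
  obtain ⟨g, hg⟩ := IsGreedyFlag.exists_of_finrank_eq hC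
  rw [hv.eq (hg.isRevLexMin_wt hC)]
  exact wt_eq_of_mem_TDG hD (hg.mem_TDG _)

/-- the top-down greedy weights of an `[n,k]` code `C` coincide with the
top-down greedy weights of its matroid `M_C`: if `v = (ẽ_1(M_C),…,ẽ_k(M_C))` is the
reverse-lexicographic minimum of `{e(S) : S ∈ Σ}` then the weight of any top-down greedy
`i`-subcode of `C` is `v i`. -/
theorem statement13 {F : Type*} [Field F] [Fintype F] {m k n : ℕ} (hmk : m + k = n)
    (H : Matrix (Fin m) (Fin n) F) (hH : H.rank = m)
    (v : Fin k → ℕ) (hv : IsRevLexMin (eSetC H k) v) :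
    ∀ i : Fin k, ∀ D ∈ TDG (codeOf H) k (k - ((i : ℕ) + 1)), wt D = v i :=
  have hC : Module.finrank F (codeOf H) = k := by
    have := rank_add_finrank_codeOf H
    lia
  statement13_general H hC v hv

end
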